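/- Let σ_uni(i, n−i) = |T_i|·|T_{n−i}|/|T_n| (the leaf-centric source inducing the uniform distribution on T_n), which for suitable δ > 1, γ ∈ (0,1/2), N satisfies ∑_{γn ≤ k ≤ (1−γ)n} σ_uni(k,n−k) ≥ (1−2γ)/(δ√(πγn)) for n ≥ N. Then E(H_{n,σ_uni}) ∈ O(√n · (log n)²). -/

import Mathlib

inductive BTree
  | leaf : BTree
  | node : BTree → BTree → BTree
deriving DecidableEq

def BTree.size : BTree → ℕ
  | .leaf => 1
  | .node l r => l.size + r.size

def BTree.height : BTree → ℕ
  | .leaf => 0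
  | .node l r => 1 + max l.height r.height

noncomputable def Pσ (σ : ℕ → ℕ → ℝ) : BTree → ℝ
  | .leaf => 1
  | .node l r => σ l.size r.size * Pσ σ l * Pσ σ r

def trees : ℕ → Finset BTree
  | 0 => ∅
  | 1 => {BTree.leaf}
  | (n+2) => (Finset.Ico 1 (n+2)).attach.biUnion
      (fun k => ((trees k.1) ×ˢ (trees (n+2-k.1))).image (fun p => BTree.node p.1 p.2))
  decreasing_by
  · exact (Finset.mem_Ico.mp k.2).2
  · have h := (Finset.mem_Ico.mp k.2).1; omega

noncomputable def expPow (σ : ℕ → ℕ → ℝ) (φ : ℝ) (n : ℕ) : ℝ :=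
  ∑ t ∈ trees n, Pσ σ t * φ ^ t.height

noncomputable def expH (σ : ℕ → ℕ → ℝ) (n : ℕ) : ℝ :=
  ∑ t ∈ trees n, Pσ σ t * (t.height : ℝ)

open Filter Asymptotics Real

/-- The leaf-centric source inducing the uniform distribution on binary trees:
σ_uni(i, j) = |T_i|·|T_j| / |T_{i+j}|. -/
noncomputable def σuni (i j : ℕ) : ℝ :=
  ((trees i).card * (trees j).card : ℝ) / ((trees (i + j)).card : ℝ)

lemma le_of_sq_le_sq_aux {a b : ℝ} (h : a^2 ≤ b^2) (hb : 0 ≤ b) : a ≤ b :=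
  (le_abs_self a).trans (abs_le_of_sq_le_sq h hb)

open Finset in
lemma mem_trees_iff (n : ℕ) (t : BTree) : t ∈ trees n ↔ t.size = n := by
  induction t generalizing n with
  | leaf =>
    match n with
    | 0 => simp [trees, BTree.size]
    | 1 => simp [trees, BTree.size]
    | n+2 => 
      rw [trees]
      simp [BTree.size]
  | node l r hl hr =>
    have pos : ∀ t : BTree, 1 ≤ t.size := by
      intro t
      induction t with
      | leaf => simp [BTree.size]
      | node l r hl hr => simp only [BTree.size]; omega
    have h1 := pos l
    have h2 := pos r
    match n with
    | 0 => simp only [trees, BTree.size]; simp; omega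
    | 1 => simp only [trees, BTree.size]; simp; omega
    | n+2 =>
      rw [trees]
      simp only [mem_biUnion, mem_attach, true_and, mem_image, mem_product, Prod.exists, Subtype.exists, mem_Ico, BTree.size, BTree.node.injEq]
      constructor
      · rintro ⟨k, hk, a, b, ⟨ha, hb⟩, rfl, rfl⟩
        rw [hl] at ha
        rw [hr] at hb
        omega
      · intro h
        refine ⟨l.size, by omega, l, r, ⟨by rw [hl], by rw [hr]; omega⟩, rfl, rfl⟩

lemma size_pos' (t : BTree) : 1 ≤ t.size := by
  induction t with
  | leaf => simp [BTree.size]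
  | node l r hl hr => simp only [BTree.size]; omega

lemma height_le_size (t : BTree) : t.height ≤ t.size := by
  induction t with
  | leaf => simp [BTree.height]
  | node l r hl hr =>
    have := size_pos' l
    have := size_pos' r
    simp only [BTree.size, BTree.height]; omega

lemma card_trees_add_two (n : ℕ) : (trees (n+2)).card =
    ∑ p ∈ Finset.HasAntidiagonal.antidiagonal n, (trees (p.1+1)).card * (trees (p.2+1)).card := by
  have : trees (n+2) = (Finset.HasAntidiagonal.antidiagonal n).biUnion
      (fun p => ((trees (p.1+1)) ×ˢ (trees (p.2+1))).image (fun p => BTree.node p.1 p.2)) := by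
    ext t
    simp only [mem_trees_iff, Finset.mem_biUnion, Finset.HasAntidiagonal.mem_antidiagonal, Finset.mem_image,
      Finset.mem_product, Prod.exists]
    constructor
    · intro h
      cases t with
      | leaf => simp [BTree.size] at h
      | node l r =>
        have := size_pos' l
        have := size_pos' r
        simp only [BTree.size] at h
        exact ⟨l.size - 1, r.size - 1, by omega, l, r, ⟨by omega, by omega⟩, rfl⟩
    · rintro ⟨a, b, h, l, r, ⟨h1, h2⟩, rfl⟩
      simp only [BTree.size]; omega
  rw [this, Finset.card_biUnion]
  · refine Finset.sum_congr rfl fun p _ => ?_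
    rw [Finset.card_image_of_injective, Finset.card_product]
    rintro ⟨a, b⟩ ⟨c, d⟩ h
    simpa using h
  · rintro ⟨a, b⟩ _ ⟨c, d⟩ _ hne
    rw [Function.onFun, Finset.disjoint_left]
    intro t ht ht'
    simp only [Finset.mem_image, Finset.mem_product, Prod.exists, mem_trees_iff] at ht ht'
    obtain ⟨l, r, ⟨h1, h2⟩, rfl⟩ := ht
    obtain ⟨l', r', ⟨h1', h2'⟩, he⟩ := ht'
    simp only [BTree.node.injEq] at he
    obtain ⟨rfl, rfl⟩ := he
    apply hne
    simp only [Prod.mk.injEq]; omega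

lemma card_trees (n : ℕ) : (trees (n+1)).card = catalan n := by
  induction n using Nat.strong_induction_on with
  | _ n ih =>
    match n with
    | 0 => simp [trees]
    | n+1 =>
      rw [card_trees_add_two, catalan_succ']
      refine Finset.sum_congr rfl fun p hp => ?_
      rw [Finset.HasAntidiagonal.mem_antidiagonal] at hp
      rw [ih p.1 (by omega), ih p.2 (by omega)]

lemma cb_bounds (n : ℕ) : ((n+1).centralBinom : ℝ)^2 * (4 * (n+1)) ≥ 16^(n+1) ∧
    ((n+1).centralBinom : ℝ)^2 * (2 * (n+1) + 1) ≤ 16^(n+1) := by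
  induction n with
  | zero => norm_num [Nat.centralBinom, Nat.choose]
  | succ n ih =>
    have h := Nat.succ_mul_centralBinom_succ (n+1)
    have h' : ((n:ℝ)+2) * ((n+2).centralBinom : ℝ) = 2 * (2 * (n+1)+1) * ((n+1).centralBinom : ℝ) := by
      exact_mod_cast h
    have e : ((n+2).centralBinom : ℝ) = 2 * (2 * (n+1)+1) * ((n+1).centralBinom : ℝ) / (n+2) := by
      field_simp; linarith
    obtain ⟨h1, h2⟩ := ih
    have hn : (0:ℝ) ≤ n := Nat.cast_nonneg n
    push_cast
    rw [show n + 1 + 1 = n + 2 from rfl, e, pow_succ (16:ℝ) (n+1)]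
    generalize ((n+1).centralBinom : ℝ) = c at *
    constructor
    · have : (2 * (2 * ((n:ℝ)+1)+1) * c / (n+2))^2 * (4 * (n+1+1)) =
        (c^2 * (4 * (n+1))) * (4 * (2 * n+3)^2 / ((n+1) * (n+2))) := by
        field_simp; ring
      rw [this]
      have : 16 ≤ (4 * (2 * (n:ℝ)+3)^2 / ((n+1) * (n+2))) := by
        rw [le_div_iff₀ (by positivity)]; nlinarith
      exact mul_le_mul h1 this (by norm_num) (by positivity)
    · have : (2 * (2 * ((n:ℝ)+1)+1) * c / (n+2))^2 * (2 * (n+1+1)+1) =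
        (c^2 * (2 * (n+1)+1)) * (4 * (2 * n+3) * (2 * n + 5) / ((n+2)^2)) := by
        field_simp; ring
      rw [this]
      have : (4 * (2 * (n:ℝ)+3) * (2 * n+5) / ((n+2)^2)) ≤ 16 := by
        rw [div_le_iff₀ (by positivity)]; nlinarith
      exact mul_le_mul h2 this (by positivity) (by positivity)

lemma card_bounds (n : ℕ) (hn : 1 ≤ n) : (16:ℝ)^n ≤ ((trees n).card : ℝ)^2 * (64 * n^3) ∧
    ((trees n).card : ℝ)^2 * (4 * n^3) ≤ 16^n := by
  obtain ⟨m, rfl⟩ : ∃ m, n = m + 1 := ⟨n-1, by omega⟩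
  rw [card_trees]
  obtain ⟨h1, h2⟩ := cb_bounds m
  have e1 : ((m:ℝ)+1) * (catalan m : ℝ) = (m.centralBinom : ℝ) := by
    exact_mod_cast succ_mul_catalan_eq_centralBinom m
  have e2 : ((m:ℝ)+1) * ((m+1).centralBinom : ℝ) = 2 * (2 * m+1) * (m.centralBinom : ℝ) := by
    exact_mod_cast Nat.succ_mul_centralBinom_succ m
  have e3 : ((m+1).centralBinom : ℝ) = 2 * (2 * m+1) * (catalan m : ℝ) := by
    have : (m:ℝ)+1 ≠ 0 := by positivity
    apply mul_left_cancel₀ this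
    rw [e2, ← e1]; ring
  rw [e3] at h1 h2
  push_cast
  have hm : (0:ℝ) ≤ m := Nat.cast_nonneg m
  generalize (catalan m : ℝ) = c at *
  constructor
  · refine h1.trans ?_
    have : (2 * (2 * (m:ℝ)+1))^2 * (4 * (m+1)) ≤ 64 * (m+1)^3 := by nlinarith [mul_nonneg hm hm]
    nlinarith [mul_le_mul_of_nonneg_left this (sq_nonneg c)]
  · refine le_trans ?_ h2
    have : 4 * ((m:ℝ)+1)^3 ≤ (2 * (2 * (m:ℝ)+1))^2 * (2 * (m+1)+1) := by
      nlinarith [mul_nonneg hm hm, mul_nonneg (mul_nonneg hm hm) hm]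
    nlinarith [mul_le_mul_of_nonneg_left this (sq_nonneg c)]

lemma card_pos' (n : ℕ) (hn : 1 ≤ n) : (0:ℝ) < ((trees n).card : ℝ) := by
  have := (card_bounds n hn).1
  rcases (Nat.cast_nonneg (α := ℝ) (trees n).card).eq_or_lt with h | h
  · rw [← h] at this
    have : (0:ℝ) < 16^n := by positivity
    linarith
  · exact h

lemma Puni (t : BTree) : Pσ σuni t = 1 / ((trees t.size).card : ℝ) := by
  induction t with
  | leaf => simp [Pσ, BTree.size, trees]
  | node l r hl hr =>
    have h1 := card_pos' _ (size_pos' l)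
    have h2 := card_pos' _ (size_pos' r)
    rw [Pσ, hl, hr, BTree.size, σuni]
    field_simp

lemma sigma_lower (n k : ℕ) (hk : 1 ≤ k) (hkn : k < n) :
    1 / (4 * (n * √(n:ℝ))) ≤ σuni k (n-k) := by
  obtain ⟨j, rfl⟩ : ∃ j, n = k + j := ⟨n-k, by omega⟩
  have hj : 1 ≤ j := by omega
  have hs : k + j - k = j := by omega
  rw [hs, σuni]
  have a1 := (card_bounds k hk).1
  have a2 := (card_bounds j hj).1
  have a3 := (card_bounds (k+j) (by omega)).2
  have p1 := card_pos' k hk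
  have p2 := card_pos' j hj
  have p3 := card_pos' (k+j) (by omega)
  generalize ((trees k).card : ℝ) = a at *
  generalize ((trees j).card : ℝ) = b at *
  generalize ((trees (k+j)).card : ℝ) = c at *
  push_cast at *
  have hk' : (1:ℝ) ≤ k := by exact_mod_cast hk
  have hj' : (1:ℝ) ≤ j := by exact_mod_cast hj
  generalize hx : (k:ℝ) = x at *
  generalize hy : (j:ℝ) = y at *
  rw [div_le_div_iff₀ (by positivity) p3]
  refine le_of_sq_le_sq_aux ?_ (by positivity)
  have hsq : √(x+y)^2 = x+y := Real.sq_sqrt (by positivity)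
  have e : (a * b * (4 * ((x+y) * √(x+y))))^2 = 16 * a^2 * b^2 * (x+y)^3 := by
    rw [mul_pow, mul_pow, mul_pow, mul_pow, hsq]; ring
  rw [e]
  have m : (16:ℝ)^(k+j) ≤ (a^2 * (64 * x^3)) * (b^2 * (64 * y^3)) := by
    rw [pow_add]; exact mul_le_mul a1 a2 (by positivity) (by positivity)
  have q : 4 * (x * y) ≤ (x+y)^2 := by nlinarith [sq_nonneg (x-y)]
  have q3 : (4 * (x * y))^3 ≤ ((x+y)^2)^3 := pow_le_pow_left₀ (by positivity) q 3
  have q4 : c^2 * (4 * (x+y)^3) ≤ 64 * a^2 * b^2 * ((x+y)^2)^3 := by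
    calc _ ≤ _ := a3
      _ ≤ _ := m
      _ = 64 * a^2 * b^2 * (4 * (x * y))^3 := by ring
      _ ≤ _ := by gcongr
  have hp : 0 < 4 * (x+y)^3 := by positivity
  apply le_of_mul_le_mul_right _ hp
  calc _ = c^2 * (4 * (x+y)^3) := by ring
    _ ≤ _ := q4
    _ = _ := by ring

lemma part1 : ∃ δ : ℝ, 1 < δ ∧ ∃ γ : ℝ, 0 < γ ∧ γ < 1 / 2 ∧ ∃ N : ℕ, ∀ n : ℕ, N ≤ n →
      (1 - 2 * γ) / (δ * Real.sqrt (Real.pi * γ * n)) ≤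
        ∑ k ∈ (Finset.Ico 1 n).filter
          (fun k : ℕ => γ * (n : ℝ) ≤ (k : ℝ) ∧ (k : ℝ) ≤ (1 - γ) * (n : ℝ)),
            σuni k (n - k) := by
  refine ⟨16, by norm_num, 1/4, by norm_num, by norm_num, 8, fun n hn => ?_⟩
  have hn' : (8:ℝ) ≤ n := by exact_mod_cast hn
  set S := (Finset.Ico 1 n).filter
          (fun k : ℕ => (1/4:ℝ) * (n : ℝ) ≤ (k : ℝ) ∧ (k : ℝ) ≤ (1 - 1/4) * (n : ℝ)) with hS
  have h1 : ∑ k ∈ S, 1 / (4 * (n * √(n:ℝ))) ≤ ∑ k ∈ S, σuni k (n-k) := by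
    refine Finset.sum_le_sum fun k hk => ?_
    rw [hS, Finset.mem_filter, Finset.mem_Ico] at hk
    exact sigma_lower n k hk.1.1 hk.1.2
  refine le_trans ?_ h1
  have hc : (n:ℝ)/4 ≤ (S.card : ℝ) := by
    have hsub : Finset.Icc ((n+3)/4) (3*n/4) ⊆ S := by
      intro k hk
      rw [Finset.mem_Icc] at hk
      rw [hS, Finset.mem_filter, Finset.mem_Ico]
      have b1 : n ≤ 4 * k := by omega
      have b2 : 4 * k ≤ 3 * n := by omega
      have b1' : (n:ℝ) ≤ 4 * k := by exact_mod_cast b1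
      have b2' : 4 * (k:ℝ) ≤ 3 * n := by exact_mod_cast b2
      refine ⟨by omega, by linarith, by linarith⟩
    have := Finset.card_le_card hsub
    rw [Nat.card_Icc] at this
    have h4 : n ≤ 4 * S.card := by omega
    have h4' : (n:ℝ) ≤ 4 * S.card := by exact_mod_cast h4
    linarith
  rw [Finset.sum_const, nsmul_eq_mul]
  have hsn : 0 < √(n:ℝ) := Real.sqrt_pos.mpr (by linarith)
  have hsq : √(n:ℝ) / 2 ≤ √(Real.pi * (1/4) * n) := by
    apply Real.le_sqrt_of_sq_le
    rw [div_pow, Real.sq_sqrt (by linarith)]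
    nlinarith [Real.pi_gt_three]
  calc (1 - 2 * (1/4)) / (16 * √(Real.pi * (1/4) * n)) ≤ (1 - 2 * (1/4)) / (16 * (√(n:ℝ)/2)) := by
        gcongr; try norm_num
    _ = (n:ℝ)/4 * (1 / (4 * (n * √(n:ℝ)))) := by field_simp; norm_num
    _ ≤ _ := by gcongr

/-- all trees of size at most N -/
def FT (N : ℕ) : Finset BTree := (Finset.range (N+1)).biUnion trees

lemma mem_FT (N : ℕ) (t : BTree) : t ∈ FT N ↔ t.size ≤ N := by
  simp [FT, mem_trees_iff, Nat.lt_succ_iff]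

lemma sum_image_node (z : ℝ) (A B : Finset BTree) :
    ∑ t ∈ (A ×ˢ B).image (fun p => BTree.node p.1 p.2), z ^ t.size =
      (∑ t ∈ A, z ^ t.size) * (∑ t ∈ B, z ^ t.size) := by
  rw [Finset.sum_image, Finset.sum_product, Finset.sum_mul_sum]
  · simp only [BTree.size, pow_add]
  · rintro ⟨a, b⟩ _ ⟨c, d⟩ _ h
    simpa using h

lemma W_FT (z u : ℝ) (hz : 0 ≤ z) (hu : 0 ≤ u) (h : z + u^2 ≤ u) (N : ℕ) :
    ∑ t ∈ FT N, z ^ t.size ≤ u := by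
  induction N with
  | zero =>
    have : FT 0 = ∅ := by
      ext t; have := size_pos' t; simp [mem_FT]; omega
    simpa [this]
  | succ N ih =>
    have hsub : FT (N+1) ⊆ {BTree.leaf} ∪ (FT N ×ˢ FT N).image (fun p => BTree.node p.1 p.2) := by
      intro t ht
      rw [mem_FT] at ht
      cases t with
      | leaf => simp
      | node l r =>
        have := size_pos' l
        have := size_pos' r
        simp only [BTree.size] at ht
        simp [mem_FT]; omega
    have h0 : 0 ≤ ∑ t ∈ FT N, z ^ t.size := Finset.sum_nonneg fun t _ => by positivity
    calc _ ≤ _ := Finset.sum_le_sum_of_subset_of_nonneg hsub fun t _ _ => by positivity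
      _ ≤ ∑ t ∈ {BTree.leaf}, z ^ t.size +
          ∑ t ∈ (FT N ×ˢ FT N).image (fun p => BTree.node p.1 p.2), z ^ t.size := by
        rw [← Finset.sum_union_inter]
        exact le_add_of_nonneg_right (Finset.sum_nonneg fun t _ => by positivity)
      _ = z + (∑ t ∈ FT N, z ^ t.size)^2 := by
        rw [sum_image_node, Finset.sum_singleton, BTree.size, pow_one, sq]
      _ ≤ z + u^2 := by gcongr
      _ ≤ u := h

lemma W_GT (z u : ℝ) (hz : 0 ≤ z) (hu : 0 ≤ u) (h : z + u^2 ≤ u) (d N : ℕ) :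
    ∑ t ∈ (FT N).filter (fun t => d ≤ t.height), z ^ t.size ≤ u * (2 * u)^d := by
  induction d generalizing N with
  | zero => simpa using W_FT z u hz hu h N
  | succ d ih =>
    set A := (FT N).filter (fun t => d ≤ t.height) with hA
    have hsub : (FT N).filter (fun t => d + 1 ≤ t.height) ⊆
        (A ×ˢ FT N).image (fun p => BTree.node p.1 p.2) ∪
        (FT N ×ˢ A).image (fun p => BTree.node p.1 p.2) := by
      intro t ht
      rw [Finset.mem_filter, mem_FT] at ht
      cases t with
      | leaf => simp [BTree.height] at ht
      | node l r =>
        have := size_pos' l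
        have := size_pos' r
        simp only [BTree.size, BTree.height] at ht
        simp [mem_FT, hA]; omega
    have h0 : 0 ≤ ∑ t ∈ FT N, z ^ t.size := Finset.sum_nonneg fun t _ => by positivity
    calc _ ≤ _ := Finset.sum_le_sum_of_subset_of_nonneg hsub fun t _ _ => by positivity
      _ ≤ ∑ t ∈ (A ×ˢ FT N).image (fun p => BTree.node p.1 p.2), z ^ t.size +
          ∑ t ∈ (FT N ×ˢ A).image (fun p => BTree.node p.1 p.2), z ^ t.size := by
        rw [← Finset.sum_union_inter]
        exact le_add_of_nonneg_right (Finset.sum_nonneg fun t _ => by positivity)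
      _ = 2 * ((∑ t ∈ A, z ^ t.size) * (∑ t ∈ FT N, z ^ t.size)) := by
        rw [sum_image_node, sum_image_node]; ring
      _ ≤ 2 * ((u * (2 * u)^d) * u) := by
        have := W_FT z u hz hu h N
        have := ih N
        gcongr
      _ = _ := by ring

lemma expH_le (n d : ℕ) (hn : 1 ≤ n) (hd : 6 * √(n:ℝ) * Real.log n ≤ d) :
    expH σuni n ≤ d + 16 := by
  have hn' : (1:ℝ) ≤ n := by exact_mod_cast hn
  have hT := card_pos' n hn
  set T : ℝ := ((trees n).card : ℝ) with hTdef
  set B := (trees n).filter (fun t => d ≤ t.height) with hB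
  have hs1 : 1 ≤ √(n:ℝ) := Real.one_le_sqrt.mpr hn'
  have hs2 : √(n:ℝ)^2 = n := Real.sq_sqrt (by linarith)
  -- step 1
  have s1 : expH σuni n ≤ d + n * B.card / T := by
    have : expH σuni n ≤ ∑ t ∈ trees n, (1 / T) * (d + if d ≤ t.height then (n:ℝ) else 0) := by
      unfold expH
      refine Finset.sum_le_sum fun t ht => ?_
      rw [mem_trees_iff] at ht
      rw [Puni, ht]
      have hh := height_le_size t
      rw [ht] at hh
      gcongr
      split_ifs with hc
      · have : (t.height : ℝ) ≤ n := by exact_mod_cast hh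
        have : (0:ℝ) ≤ d := Nat.cast_nonneg d
        linarith
      · rw [add_zero]; exact_mod_cast (not_le.mp hc).le
    refine this.trans (le_of_eq ?_)
    rw [← Finset.mul_sum, Finset.sum_add_distrib, ← Finset.sum_filter, Finset.sum_const,
      Finset.sum_const, nsmul_eq_mul, nsmul_eq_mul, ← hTdef, ← hB]
    field_simp
  -- step 2
  set ε : ℝ := 1 / (2 * √(n:ℝ)) with hε
  have he0 : 0 < ε := by positivity
  have he1 : ε ≤ 1/2 := by
    rw [hε]; apply one_div_le_one_div_of_le <;> linarith
  have he2 : ε^2 = 1/(4*n) := by rw [hε, div_pow, mul_pow, hs2]; norm_num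
  have hW := W_GT ((1-ε^2)/4) ((1-ε)/2) (by nlinarith) (by linarith) (by nlinarith) d n
  have s2 : (B.card : ℝ) * ((1-ε^2)/4)^n ≤ 1 / n^3 := by
    calc (B.card : ℝ) * ((1-ε^2)/4)^n = ∑ t ∈ B, ((1-ε^2)/4)^t.size := by
          rw [← nsmul_eq_mul, ← Finset.sum_const]
          refine Finset.sum_congr rfl fun t ht => ?_
          rw [hB, Finset.mem_filter, mem_trees_iff] at ht
          rw [ht.1]
      _ ≤ ∑ t ∈ (FT n).filter (fun t => d ≤ t.height), ((1-ε^2)/4)^t.size := by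
          refine Finset.sum_le_sum_of_subset_of_nonneg ?_ fun t _ _ => by
            apply pow_nonneg; nlinarith
          intro t ht
          rw [hB, Finset.mem_filter, mem_trees_iff] at ht
          rw [Finset.mem_filter, mem_FT]
          exact ⟨ht.1.le, ht.2⟩
      _ ≤ _ := hW
      _ ≤ 1 * (1-ε)^d := by
          rw [show 2 * ((1-ε)/2) = 1 - ε by ring]
          have : 0 ≤ (1-ε)^d := pow_nonneg (by linarith) _
          gcongr; linarith
      _ ≤ (Real.exp (-ε))^d := by
          rw [one_mul]
          have := Real.add_one_le_exp (-ε)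
          gcongr <;> linarith
      _ = Real.exp (-(ε*d)) := by rw [← Real.exp_nat_mul]; congr 1; ring
      _ ≤ Real.exp (-(3 * Real.log n)) := by
          apply Real.exp_le_exp.mpr
          apply neg_le_neg
          rw [hε, one_div_mul_eq_div, le_div_iff₀ (by positivity)]
          linarith
      _ = 1 / n^3 := by
          rw [Real.exp_neg, show (3:ℝ) * Real.log n = ((3:ℕ):ℝ) * Real.log n by norm_num,
            Real.exp_nat_mul, Real.exp_log (by linarith), one_div]
  have s3 : (1:ℝ)/2 ≤ (1-ε^2)^n := by
    have := one_add_mul_le_pow (a := -ε^2) (by nlinarith) n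
    rw [← sub_eq_add_neg] at this
    refine le_trans ?_ this
    rw [he2]; field_simp; norm_num
  have s4 : (B.card : ℝ) ≤ 2 * 4^n / n^3 := by
    rw [div_pow] at s2
    have h4 : (0:ℝ) < 4^n := by positivity
    have hb : (B.card : ℝ) * ((1/2)/4^n) ≤ 1/n^3 := le_trans (by gcongr) s2
    calc (B.card : ℝ) = (B.card : ℝ) * ((1/2)/4^n) * (2 * 4^n) := by field_simp
      _ ≤ 1/n^3 * (2 * 4^n) := by gcongr
      _ = _ := by ring
  have s5 : (4:ℝ)^n ≤ T * (8 * n^2) := by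
    refine le_of_sq_le_sq_aux ?_ (by positivity)
    calc ((4:ℝ)^n)^2 = 16^n := by rw [← pow_mul, mul_comm, pow_mul]; norm_num
      _ ≤ T^2 * (64 * n^3) := (card_bounds n hn).1
      _ ≤ T^2 * (64 * n^4) := by gcongr; try norm_num
      _ = _ := by ring
  refine s1.trans ?_
  gcongr
  rw [div_le_iff₀ hT]
  calc (n:ℝ) * B.card ≤ n * (2 * (T * (8 * n^2)) / n^3) := by
        gcongr; exact s4.trans (by gcongr)
    _ = 16 * T := by field_simp; norm_num

theorem uniform_model_expected_height :
    (∃ δ : ℝ, 1 < δ ∧ ∃ γ : ℝ, 0 < γ ∧ γ < 1 / 2 ∧ ∃ N : ℕ, ∀ n : ℕ, N ≤ n →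
      (1 - 2 * γ) / (δ * Real.sqrt (Real.pi * γ * n)) ≤
        ∑ k ∈ (Finset.Ico 1 n).filter
          (fun k : ℕ => γ * (n : ℝ) ≤ (k : ℝ) ∧ (k : ℝ) ≤ (1 - γ) * (n : ℝ)),
            σuni k (n - k)) ∧
    (fun n : ℕ => expH σuni n) =O[atTop]
      (fun n : ℕ => Real.sqrt n * (Real.log n) ^ 2) := by
  refine ⟨part1, ?_⟩
  apply IsBigO.of_bound 23
  filter_upwards [eventually_ge_atTop 3] with n hn
  have hn' : (3:ℝ) ≤ n := by exact_mod_cast hn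
  have hl : 1 ≤ Real.log n := by
    rw [Real.le_log_iff_exp_le (by linarith)]
    linarith [Real.exp_one_lt_d9]
  have hs1 : 1 ≤ √(n:ℝ) := Real.one_le_sqrt.mpr (by linarith)
  have h0 : 0 ≤ expH σuni n := by
    unfold expH
    refine Finset.sum_nonneg fun t _ => ?_
    rw [Puni]; positivity
  rw [Real.norm_of_nonneg h0, Real.norm_of_nonneg (by positivity)]
  have h1 := expH_le n ⌈6 * √(n:ℝ) * Real.log n⌉₊ (by omega) (Nat.le_ceil _)
  have h2 := Nat.ceil_lt_add_one (a := 6 * √(n:ℝ) * Real.log n) (by positivity)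
  have h3 : Real.log n ≤ Real.log n ^ 2 := by nlinarith
  have h4 : √(n:ℝ) * Real.log n ≤ √(n:ℝ) * Real.log n ^ 2 := by gcongr
  have h5 : 1 ≤ √(n:ℝ) * Real.log n := by nlinarith
  linarith
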